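/- For every a ∈ k^×, the set of maximal D^{≥0}-submodules of W_{a,0} is exactly the family {V_{a,c} : c ∈ k}, where V_{a,c} is the cyclic submodule generated by ζ⊗x_{a,0} + (c/2)·(1⊗x_{a,0}). -/

import Mathlib

open FreeAlgebra

/-- Generators of the double of the Jordan plane. -/
inductive JGen : Type
  | u | v | zeta | g | ginv | x | y

variable (k : Type) [Field k] [IsAlgClosed k] [CharZero k]

/-- The defining relations of the double of the Jordan plane. -/
inductive JRel : FreeAlgebra k JGen → FreeAlgebra k JGen → Prop
  | gginv : JRel (ι k .g * ι k .ginv) 1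
  | ginvg : JRel (ι k .ginv * ι k .g) 1
  | zg : JRel (ι k .zeta * ι k .g) (ι k .g * ι k .zeta)
  | gx : JRel (ι k .g * ι k .x) (ι k .x * ι k .g)
  | gy : JRel (ι k .g * ι k .y) (ι k .y * ι k .g + ι k .x * ι k .g)
  | zy : JRel (ι k .zeta * ι k .y) (ι k .y * ι k .zeta + ι k .y)
  | zx : JRel (ι k .zeta * ι k .x) (ι k .x * ι k .zeta + ι k .x)
  | ug : JRel (ι k .u * ι k .g) (ι k .g * ι k .u)
  | vg : JRel (ι k .v * ι k .g) (ι k .g * ι k .v + ι k .g * ι k .u)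
  | vz : JRel (ι k .v * ι k .zeta) (ι k .zeta * ι k .v + ι k .v)
  | uz : JRel (ι k .u * ι k .zeta) (ι k .zeta * ι k .u + ι k .u)
  | yx : JRel (ι k .y * ι k .x) (ι k .x * ι k .y - (1/2 : k) • (ι k .x * ι k .x))
  | vu : JRel (ι k .v * ι k .u) (ι k .u * ι k .v - (1/2 : k) • (ι k .u * ι k .u))
  | ux : JRel (ι k .u * ι k .x) (ι k .x * ι k .u)
  | vx : JRel (ι k .v * ι k .x) (ι k .x * ι k .v + (1 - ι k .g) + ι k .x * ι k .u)
  | uy : JRel (ι k .u * ι k .y) (ι k .y * ι k .u + (1 - ι k .g))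
  | vy : JRel (ι k .v * ι k .y) (ι k .y * ι k .v - ι k .g * ι k .zeta + ι k .y * ι k .u)

/-- The double of the Jordan plane, as the presented algebra. -/
def D : Type := RingQuot (JRel k)

noncomputable instance : Ring (D k) := inferInstanceAs (Ring (RingQuot (JRel k)))
noncomputable instance : Algebra k (D k) := inferInstanceAs (Algebra k (RingQuot (JRel k)))

/-- The canonical projection from the free algebra onto `D`. -/
noncomputable def Dmk : FreeAlgebra k JGen →ₐ[k] D k := RingQuot.mkAlgHom k (JRel k)

noncomputable def DU : D k := Dmk k (ι k .u)
noncomputable def DV : D k := Dmk k (ι k .v)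
noncomputable def DZ : D k := Dmk k (ι k .zeta)
noncomputable def DG : D k := Dmk k (ι k .g)
noncomputable def DGinv : D k := Dmk k (ι k .ginv)
noncomputable def DX : D k := Dmk k (ι k .x)
noncomputable def DY : D k := Dmk k (ι k .y)

set_option synthInstance.maxHeartbeats 1000000
set_option maxHeartbeats 2000000

/-- The subalgebra `D^{≥0}` of `D` generated by `g, g⁻¹, ζ, u, v`. -/
noncomputable def Dgeq : Subalgebra k (D k) :=
  Algebra.adjoin k {DG k, DGinv k, DZ k, DU k, DV k}

noncomputable def sG : Dgeq k := ⟨DG k, Algebra.subset_adjoin (by simp)⟩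
noncomputable def sGinv : Dgeq k := ⟨DGinv k, Algebra.subset_adjoin (by simp)⟩
noncomputable def sZ : Dgeq k := ⟨DZ k, Algebra.subset_adjoin (by simp)⟩
noncomputable def sU : Dgeq k := ⟨DU k, Algebra.subset_adjoin (by simp)⟩
noncomputable def sV : Dgeq k := ⟨DV k, Algebra.subset_adjoin (by simp)⟩

/-- The left ideal of `D^{≥0}` generated by `g - a`, `v - b` and `u`
(the annihilator of the generator `x_{a,b}` of the one-dimensional `H`-module `k_{a,b}`). -/
noncomputable def WIdeal (a b : k) : Submodule (Dgeq k) (Dgeq k) :=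
  Submodule.span (Dgeq k)
    {sG k - algebraMap k (Dgeq k) a, sV k - algebraMap k (Dgeq k) b, sU k}

/-- The induced module `W_{a,b} = D^{≥0} ⊗_H k_{a,b}`, realized as the quotient of `D^{≥0}`
by the left ideal `WIdeal a b`. -/
noncomputable abbrev Wmod (a b : k) : Type := (Dgeq k) ⧸ (WIdeal k a b)

/-- The class of `d ∈ D^{≥0}` in `W_{a,b}`; the class of `1` corresponds to `1 ⊗ x_{a,b}`. -/
noncomputable def wmk (a b : k) : Dgeq k → Wmod k a b := Submodule.Quotient.mk
/-- The submodule `V_{a,c}` of `W_{a,0}` generated by `ζ ⊗ x_{a,0} + (c/2)·(1 ⊗ x_{a,0})`. -/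
noncomputable def Vsub (a c : k) : Submodule (Dgeq k) (Wmod k a 0) :=
  Submodule.span (Dgeq k) {wmk k a 0 (sZ k + algebraMap k (Dgeq k) (c / 2))}

set_option linter.unusedSectionVars false
set_option linter.unusedSimpArgs false

namespace JV
open MvPolynomial

abbrev P := MvPolynomial (Fin 2) k

noncomputable abbrev mp : Derivation k (P k) (P k) := pderiv 0
noncomputable abbrev mt : Derivation k (P k) (P k) := pderiv 1
noncomputable abbrev mul (e : P k) : Module.End k (P k) := LinearMap.mulLeft k e

lemma comm_pt (f : P k) : mt k (mp k f) = mp k (mt k f) := by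
  have h : ⁅mt k, mp k⁆ = 0 := by
    apply MvPolynomial.derivation_ext
    intro i
    fin_cases i <;> simp [Derivation.commutator_apply, pderiv_X]
  have := congrArg (fun d : Derivation k (P k) (P k) => d f) h
  simpa [Derivation.commutator_apply, sub_eq_zero] using this

lemma mp0 : mp k (X 0) = 1 := by simp
lemma mp1 : mp k (X 1) = 0 := by simp [pderiv_X]
lemma mt0 : mt k (X 0) = 0 := by simp [pderiv_X]
lemma mt1 : mt k (X 1) = 1 := by simp

noncomputable def op (A : P k → P k) (h1 : ∀ f g, A (f + g) = A f + A g)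
    (h2 : ∀ (c : k) f, A (C c * f) = C c * A f) : Module.End k (P k) where
  toFun := A
  map_add' := h1
  map_smul' c f := by simp [MvPolynomial.smul_eq_C_mul, h2]

noncomputable def N : Module.End k (P k) := op k (fun f => X 0 * mt k f)
  (by intros; simp; ring) (by intros; simp; ring)

noncomputable def oX : Module.End k (P k) := op k (fun f => 2 * (X 0 * f))
  (by intros; ring) (by intros; ring)

noncomputable def oY : Module.End k (P k) := op k (fun f => X 1 * f - X 0 ^ 2 * mp k f)
  (by intros; simp; ring) (by intros; simp; ring)

noncomputable def oZ (l : k) : Module.End k (P k) :=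
  op k (fun f => C l * f + X 0 * mp k f + X 1 * mt k f)
  (by intros; simp; ring) (by intros; simp; ring)

noncomputable def oG (a : k) : Module.End k (P k) :=
  op k (fun f => C a * (f + 2 * (X 0 * mt k f) + X 0 ^ 2 * mt k (mt k f)))
  (by intros; simp; ring) (by intros; simp; ring)

noncomputable def oU (a : k) : Module.End k (P k) :=
  op k (fun f => (1 - C a) * mt k f - C a * (X 0 * mt k (mt k f)))
  (by intros; simp; ring) (by intros; simp; ring)

noncomputable def oV2 (a l : k) : Module.End k (P k) :=
  op k (fun f => (1 - C a) * mp k f + 2 * (1 - 2 * C a) * (X 0 * mp k (mt k f))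
      - 3 * C a * (X 0 ^ 2 * mp k (mt k (mt k f)))
      + X 1 * ((1 - 2 * C a) * mt k (mt k f) - 2 * C a * (X 0 * mt k (mt k (mt k f))))
      - 2 * C l * C a * mt k f - 2 * (C l + 1) * C a * (X 0 * mt k (mt k f)))
  (by intros; simp; ring) (by intros; simp; ring)

lemma op_apply (A h1 h2 f) : op k A h1 h2 f = A f := rfl

end JV

namespace JV
open MvPolynomial

lemma N_mono (n : ℕ) : ∀ (s : Fin 2 →₀ ℕ) (c : k), s 1 < n → (N k ^ n) (monomial s c) = 0 := by
  induction n with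
  | zero => intro s c h; omega
  | succ n ih =>
    intro s c h
    have h1 : N k (monomial s c)
        = monomial (Finsupp.single 0 1 + (s - Finsupp.single 1 1)) (c * (s 1 : ℕ)) := by
      show X 0 * mt k (monomial s c) = _
      rw [pderiv_monomial, X, monomial_mul, one_mul]
    rw [pow_succ, Module.End.mul_apply, h1]
    rcases Nat.eq_zero_or_pos (s 1) with h0 | h0
    · simp [h0]
    · apply ih
      simp
      omega

lemma N_nil (f : P k) : ∃ n, (N k ^ n) f = 0 := by
  induction f using MvPolynomial.induction_on' with
  | monomial s c => exact ⟨s 1 + 1, N_mono k _ s c (by omega)⟩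
  | add p q hp hq =>
    obtain ⟨n, hn⟩ := hp
    obtain ⟨m, hm⟩ := hq
    refine ⟨n + m, ?_⟩
    have e1 : (N k ^ (n + m)) p = 0 := by
      rw [add_comm, pow_add, Module.End.mul_apply, hn, map_zero]
    have e2 : (N k ^ (n + m)) q = 0 := by
      rw [pow_add, Module.End.mul_apply, hm, map_zero]
    rw [map_add, e1, e2, add_zero]

lemma surj1 (n : ℕ) : ∀ f, (N k ^ n) f = 0 → ∃ h, (1 + N k) h = f := by
  induction n with
  | zero => intro f hf; exact ⟨0, by simpa using hf.symm⟩
  | succ n ih =>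
    intro f hf
    obtain ⟨h, hh⟩ := ih (N k f) (by rw [← Module.End.mul_apply, ← pow_succ]; exact hf)
    refine ⟨f - h, ?_⟩
    rw [map_sub, hh]
    simp

lemma inj1 (f : P k) (hf : (1 + N k) f = 0) (n : ℕ) : (N k ^ n) f = 0 → f = 0 := by
  have h1 : N k f = -f := by
    rw [LinearMap.add_apply, Module.End.one_apply] at hf
    exact eq_neg_of_add_eq_zero_right hf
  induction n with
  | zero => intro h; simpa using h
  | succ n ih =>
    intro h
    rw [pow_succ, Module.End.mul_apply, h1, map_neg, neg_eq_zero] at h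
    exact ih h

lemma unit1 : IsUnit (1 + N k) := by
  rw [Module.End.isUnit_iff]
  constructor
  · rw [injective_iff_map_eq_zero]
    intro f hf
    obtain ⟨n, hn⟩ := N_nil k f
    exact inj1 k f hf n hn
  · intro f
    obtain ⟨n, hn⟩ := N_nil k f
    exact surj1 k n f hn

lemma oG_eq (a : k) : oG k a = a • ((1 + N k) * (1 + N k)) := by
  refine LinearMap.ext fun f => ?_
  show C a * (f + 2 * (X 0 * mt k f) + X 0 ^ 2 * mt k (mt k f))
    = a • ((f + X 0 * mt k f) + X 0 * mt k (f + X 0 * mt k f))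
  rw [MvPolynomial.smul_eq_C_mul]
  simp only [map_add, Derivation.leibniz, mt0, smul_eq_mul]
  ring

lemma unitG (a : k) (ha : a ≠ 0) : IsUnit (oG k a) := by
  rw [oG_eq, Algebra.smul_def]
  exact ((IsUnit.mk0 a ha).map (algebraMap k (Module.End k (P k)))).mul
    ((unit1 k).mul (unit1 k))


lemma d_C (i : Fin 2) (c : k) : pderiv i (C c : P k) = 0 := pderiv_C
lemma d_two (i : Fin 2) : pderiv i (2 : P k) = 0 := by
  rw [← map_ofNat C 2, pderiv_C]
lemma d_three (i : Fin 2) : pderiv i (3 : P k) = 0 := by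
  rw [← map_ofNat C 3, pderiv_C]

lemma r_zg (a : k) (l : k) : (oZ k l)*(oG k a) = (oG k a)*(oZ k l) := by
  refine LinearMap.ext fun f => ?_
  simp only [two_mul, Module.End.mul_apply, LinearMap.add_apply, LinearMap.sub_apply, Module.End.one_apply]
  simp only [oX, oY, oZ, oG, oU, oV2, op_apply]
  simp only [map_add, map_sub, Derivation.leibniz, Derivation.leibniz_pow, mp0, mp1, mt0, mt1,
    smul_eq_mul, comm_pt, d_C, d_two, d_three, map_zero, mul_zero, zero_mul, add_zero, zero_add, sub_zero, mul_one, Derivation.map_one_eq_zero, nsmul_eq_mul, pow_one,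
    Nat.cast_ofNat, Nat.add_one_sub_one]
  ring

lemma r_gx (a : k) : (oG k a)*(oX k) = (oX k)*(oG k a) := by
  refine LinearMap.ext fun f => ?_
  simp only [two_mul, Module.End.mul_apply, LinearMap.add_apply, LinearMap.sub_apply, Module.End.one_apply]
  simp only [oX, oY, oZ, oG, oU, oV2, op_apply]
  simp only [map_add, map_sub, Derivation.leibniz, Derivation.leibniz_pow, mp0, mp1, mt0, mt1,
    smul_eq_mul, comm_pt, d_C, d_two, d_three, map_zero, mul_zero, zero_mul, add_zero, zero_add, sub_zero, mul_one, Derivation.map_one_eq_zero, nsmul_eq_mul, pow_one,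
    Nat.cast_ofNat, Nat.add_one_sub_one]
  ring

lemma r_gy (a : k) : (oG k a)*(oY k) = (oY k)*(oG k a)+(oX k)*(oG k a) := by
  refine LinearMap.ext fun f => ?_
  simp only [two_mul, Module.End.mul_apply, LinearMap.add_apply, LinearMap.sub_apply, Module.End.one_apply]
  simp only [oX, oY, oZ, oG, oU, oV2, op_apply]
  simp only [map_add, map_sub, Derivation.leibniz, Derivation.leibniz_pow, mp0, mp1, mt0, mt1,
    smul_eq_mul, comm_pt, d_C, d_two, d_three, map_zero, mul_zero, zero_mul, add_zero, zero_add, sub_zero, mul_one, Derivation.map_one_eq_zero, nsmul_eq_mul, pow_one,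
    Nat.cast_ofNat, Nat.add_one_sub_one]
  ring

lemma r_zy (l : k) : (oZ k l)*(oY k) = (oY k)*(oZ k l)+(oY k) := by
  refine LinearMap.ext fun f => ?_
  simp only [two_mul, Module.End.mul_apply, LinearMap.add_apply, LinearMap.sub_apply, Module.End.one_apply]
  simp only [oX, oY, oZ, oG, oU, oV2, op_apply]
  simp only [map_add, map_sub, Derivation.leibniz, Derivation.leibniz_pow, mp0, mp1, mt0, mt1,
    smul_eq_mul, comm_pt, d_C, d_two, d_three, map_zero, mul_zero, zero_mul, add_zero, zero_add, sub_zero, mul_one, Derivation.map_one_eq_zero, nsmul_eq_mul, pow_one,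
    Nat.cast_ofNat, Nat.add_one_sub_one]
  ring

lemma r_zx (l : k) : (oZ k l)*(oX k) = (oX k)*(oZ k l)+(oX k) := by
  refine LinearMap.ext fun f => ?_
  simp only [two_mul, Module.End.mul_apply, LinearMap.add_apply, LinearMap.sub_apply, Module.End.one_apply]
  simp only [oX, oY, oZ, oG, oU, oV2, op_apply]
  simp only [map_add, map_sub, Derivation.leibniz, Derivation.leibniz_pow, mp0, mp1, mt0, mt1,
    smul_eq_mul, comm_pt, d_C, d_two, d_three, map_zero, mul_zero, zero_mul, add_zero, zero_add, sub_zero, mul_one, Derivation.map_one_eq_zero, nsmul_eq_mul, pow_one,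
    Nat.cast_ofNat, Nat.add_one_sub_one]
  ring

lemma r_ug (a : k) : (oU k a)*(oG k a) = (oG k a)*(oU k a) := by
  refine LinearMap.ext fun f => ?_
  simp only [two_mul, Module.End.mul_apply, LinearMap.add_apply, LinearMap.sub_apply, Module.End.one_apply]
  simp only [oX, oY, oZ, oG, oU, oV2, op_apply]
  simp only [map_add, map_sub, Derivation.leibniz, Derivation.leibniz_pow, mp0, mp1, mt0, mt1,
    smul_eq_mul, comm_pt, d_C, d_two, d_three, map_zero, mul_zero, zero_mul, add_zero, zero_add, sub_zero, mul_one, Derivation.map_one_eq_zero, nsmul_eq_mul, pow_one,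
    Nat.cast_ofNat, Nat.add_one_sub_one]
  ring

lemma r_vg (a : k) (l : k) : (oV2 k a l)*(oG k a) = (oG k a)*(oV2 k a l)+2*((oG k a)*(oU k a)) := by
  refine LinearMap.ext fun f => ?_
  simp only [two_mul, Module.End.mul_apply, LinearMap.add_apply, LinearMap.sub_apply, Module.End.one_apply]
  simp only [oX, oY, oZ, oG, oU, oV2, op_apply]
  simp only [map_add, map_sub, Derivation.leibniz, Derivation.leibniz_pow, mp0, mp1, mt0, mt1,
    smul_eq_mul, comm_pt, d_C, d_two, d_three, map_zero, mul_zero, zero_mul, add_zero, zero_add, sub_zero, mul_one, Derivation.map_one_eq_zero, nsmul_eq_mul, pow_one,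
    Nat.cast_ofNat, Nat.add_one_sub_one]
  ring

lemma r_vz (a : k) (l : k) : (oV2 k a l)*(oZ k l) = (oZ k l)*(oV2 k a l)+(oV2 k a l) := by
  refine LinearMap.ext fun f => ?_
  simp only [two_mul, Module.End.mul_apply, LinearMap.add_apply, LinearMap.sub_apply, Module.End.one_apply]
  simp only [oX, oY, oZ, oG, oU, oV2, op_apply]
  simp only [map_add, map_sub, Derivation.leibniz, Derivation.leibniz_pow, mp0, mp1, mt0, mt1,
    smul_eq_mul, comm_pt, d_C, d_two, d_three, map_zero, mul_zero, zero_mul, add_zero, zero_add, sub_zero, mul_one, Derivation.map_one_eq_zero, nsmul_eq_mul, pow_one,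
    Nat.cast_ofNat, Nat.add_one_sub_one]
  ring

lemma r_uz (a : k) (l : k) : (oU k a)*(oZ k l) = (oZ k l)*(oU k a)+(oU k a) := by
  refine LinearMap.ext fun f => ?_
  simp only [two_mul, Module.End.mul_apply, LinearMap.add_apply, LinearMap.sub_apply, Module.End.one_apply]
  simp only [oX, oY, oZ, oG, oU, oV2, op_apply]
  simp only [map_add, map_sub, Derivation.leibniz, Derivation.leibniz_pow, mp0, mp1, mt0, mt1,
    smul_eq_mul, comm_pt, d_C, d_two, d_three, map_zero, mul_zero, zero_mul, add_zero, zero_add, sub_zero, mul_one, Derivation.map_one_eq_zero, nsmul_eq_mul, pow_one,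
    Nat.cast_ofNat, Nat.add_one_sub_one]
  ring

lemma r_yx : 2*((oY k)*(oX k)) = 2*((oX k)*(oY k))-(oX k)*(oX k) := by
  refine LinearMap.ext fun f => ?_
  simp only [two_mul, Module.End.mul_apply, LinearMap.add_apply, LinearMap.sub_apply, Module.End.one_apply]
  simp only [oX, oY, oZ, oG, oU, oV2, op_apply]
  simp only [map_add, map_sub, Derivation.leibniz, Derivation.leibniz_pow, mp0, mp1, mt0, mt1,
    smul_eq_mul, comm_pt, d_C, d_two, d_three, map_zero, mul_zero, zero_mul, add_zero, zero_add, sub_zero, mul_one, Derivation.map_one_eq_zero, nsmul_eq_mul, pow_one,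
    Nat.cast_ofNat, Nat.add_one_sub_one]
  ring

lemma r_vu (a : k) (l : k) : (oV2 k a l)*(oU k a) = (oU k a)*(oV2 k a l)-(oU k a)*(oU k a) := by
  refine LinearMap.ext fun f => ?_
  simp only [two_mul, Module.End.mul_apply, LinearMap.add_apply, LinearMap.sub_apply, Module.End.one_apply]
  simp only [oX, oY, oZ, oG, oU, oV2, op_apply]
  simp only [map_add, map_sub, Derivation.leibniz, Derivation.leibniz_pow, mp0, mp1, mt0, mt1,
    smul_eq_mul, comm_pt, d_C, d_two, d_three, map_zero, mul_zero, zero_mul, add_zero, zero_add, sub_zero, mul_one, Derivation.map_one_eq_zero, nsmul_eq_mul, pow_one,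
    Nat.cast_ofNat, Nat.add_one_sub_one]
  ring

lemma r_ux (a : k) : (oU k a)*(oX k) = (oX k)*(oU k a) := by
  refine LinearMap.ext fun f => ?_
  simp only [two_mul, Module.End.mul_apply, LinearMap.add_apply, LinearMap.sub_apply, Module.End.one_apply]
  simp only [oX, oY, oZ, oG, oU, oV2, op_apply]
  simp only [map_add, map_sub, Derivation.leibniz, Derivation.leibniz_pow, mp0, mp1, mt0, mt1,
    smul_eq_mul, comm_pt, d_C, d_two, d_three, map_zero, mul_zero, zero_mul, add_zero, zero_add, sub_zero, mul_one, Derivation.map_one_eq_zero, nsmul_eq_mul, pow_one,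
    Nat.cast_ofNat, Nat.add_one_sub_one]
  ring

lemma r_vx (a : k) (l : k) : (oV2 k a l)*(oX k) = (oX k)*(oV2 k a l)+2*(1-(oG k a))+2*((oX k)*(oU k a)) := by
  refine LinearMap.ext fun f => ?_
  simp only [two_mul, Module.End.mul_apply, LinearMap.add_apply, LinearMap.sub_apply, Module.End.one_apply]
  simp only [oX, oY, oZ, oG, oU, oV2, op_apply]
  simp only [map_add, map_sub, Derivation.leibniz, Derivation.leibniz_pow, mp0, mp1, mt0, mt1,
    smul_eq_mul, comm_pt, d_C, d_two, d_three, map_zero, mul_zero, zero_mul, add_zero, zero_add, sub_zero, mul_one, Derivation.map_one_eq_zero, nsmul_eq_mul, pow_one,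
    Nat.cast_ofNat, Nat.add_one_sub_one]
  ring

lemma r_uy (a : k) : (oU k a)*(oY k) = (oY k)*(oU k a)+(1-(oG k a)) := by
  refine LinearMap.ext fun f => ?_
  simp only [two_mul, Module.End.mul_apply, LinearMap.add_apply, LinearMap.sub_apply, Module.End.one_apply]
  simp only [oX, oY, oZ, oG, oU, oV2, op_apply]
  simp only [map_add, map_sub, Derivation.leibniz, Derivation.leibniz_pow, mp0, mp1, mt0, mt1,
    smul_eq_mul, comm_pt, d_C, d_two, d_three, map_zero, mul_zero, zero_mul, add_zero, zero_add, sub_zero, mul_one, Derivation.map_one_eq_zero, nsmul_eq_mul, pow_one,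
    Nat.cast_ofNat, Nat.add_one_sub_one]
  ring

lemma r_vy (a : k) (l : k) : (oV2 k a l)*(oY k) = (oY k)*(oV2 k a l)-2*((oG k a)*(oZ k l))+2*((oY k)*(oU k a)) := by
  refine LinearMap.ext fun f => ?_
  simp only [two_mul, Module.End.mul_apply, LinearMap.add_apply, LinearMap.sub_apply, Module.End.one_apply]
  simp only [oX, oY, oZ, oG, oU, oV2, op_apply]
  simp only [map_add, map_sub, Derivation.leibniz, Derivation.leibniz_pow, mp0, mp1, mt0, mt1,
    smul_eq_mul, comm_pt, d_C, d_two, d_three, map_zero, mul_zero, zero_mul, add_zero, zero_add, sub_zero, mul_one, Derivation.map_one_eq_zero, nsmul_eq_mul, pow_one,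
    Nat.cast_ofNat, Nat.add_one_sub_one]
  ring
end JV

namespace JV

noncomputable def gens (a l : k) (gi : Module.End k (P k)) : JGen → Module.End k (P k)
  | .u => oU k a
  | .v => (1 / 2 : k) • oV2 k a l
  | .zeta => oZ k l
  | .g => oG k a
  | .ginv => gi
  | .x => oX k
  | .y => oY k

lemma two_eq (e : Module.End k (P k)) : 2 * e = (2 : k) • e := by
  rw [two_mul, two_smul]

lemma gens_rel (a l : k) (gi : Module.End k (P k)) (h1 : oG k a * gi = 1) (h2 : gi * oG k a = 1)
    ⦃p q : FreeAlgebra k JGen⦄ (h : JRel k p q) :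
    FreeAlgebra.lift k (gens k a l gi) p = FreeAlgebra.lift k (gens k a l gi) q := by
  have hyx := r_yx k
  rw [two_eq, two_eq] at hyx
  cases h <;> simp only [map_mul, map_add, map_sub, map_smul, map_one, FreeAlgebra.lift_ι_apply,
    gens, smul_mul_assoc, mul_smul_comm]
  case gginv => exact h1
  case ginvg => exact h2
  case zg => exact r_zg k a l
  case gx => exact r_gx k a
  case gy => exact r_gy k a
  case zy => exact r_zy k l
  case zx => exact r_zx k l
  case ug => exact r_ug k a
  case vg => rw [r_vg, two_eq]; module
  case vz => rw [r_vz]; module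
  case uz => exact r_uz k a l
  case yx =>
    have : oY k * oX k = (1 / 2 : k) • ((2 : k) • (oY k * oX k)) := by module
    rw [this, hyx]; module
  case vu => rw [r_vu]; module
  case ux => exact r_ux k a
  case vx => rw [r_vx, two_eq, two_eq]; module
  case uy => exact r_uy k a
  case vy => rw [r_vy, two_eq, two_eq]; module

lemma exists_rep (a l : k) (ha : a ≠ 0) : ∃ r : D k →ₐ[k] Module.End k (P k),
    r (DG k) = oG k a ∧ r (DU k) = oU k a ∧ r (DV k) = (1 / 2 : k) • oV2 k a l ∧
    r (DZ k) = oZ k l := by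
  obtain ⟨w, hw⟩ := unitG k a ha
  have h1 : oG k a * (↑w⁻¹ : Module.End k (P k)) = 1 := by rw [← hw]; exact w.mul_inv
  have h2 : (↑w⁻¹ : Module.End k (P k)) * oG k a = 1 := by rw [← hw]; exact w.inv_mul
  have key : ∀ i, RingQuot.liftAlgHom k ⟨FreeAlgebra.lift k (gens k a l ↑w⁻¹),
      gens_rel k a l _ h1 h2⟩ (RingQuot.mkAlgHom k (JRel k) (ι k i)) = gens k a l ↑w⁻¹ i := by
    intro i
    rw [RingQuot.liftAlgHom_mkAlgHom_apply, FreeAlgebra.lift_ι_apply]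
  exact ⟨RingQuot.liftAlgHom k ⟨FreeAlgebra.lift k (gens k a l ↑w⁻¹), gens_rel k a l _ h1 h2⟩,
    key .g, key .u, key .v, key .zeta⟩

lemma oG_one (a : k) : oG k a 1 = a • (1 : P k) := by
  rw [oG, op_apply, MvPolynomial.smul_eq_C_mul]; simp
lemma oU_one (a : k) : oU k a 1 = 0 := by
  rw [oU, op_apply]; simp
lemma oV_one (a l : k) : oV2 k a l 1 = 0 := by
  rw [oV2, op_apply]; simp
lemma oZ_one (l : k) : oZ k l 1 = l • (1 : P k) := by
  rw [oZ, op_apply, MvPolynomial.smul_eq_C_mul]; simp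

lemma rel_D {p q : FreeAlgebra k JGen} (h : JRel k p q) : Dmk k p = Dmk k q :=
  RingQuot.mkAlgHom_rel k h

end JV

namespace JV
section generic
open Polynomial
variable {k}
variable {S : Type} [Ring S] [Algebra k S] {G Gi Z U V : S}

lemma comm_pol (hz : Z * G = G * Z) (f : k[X]) : G * aeval Z f = aeval Z f * G := by
  induction f using Polynomial.induction_on' with
  | add p q hp hq => simp only [map_add, mul_add, add_mul, hp, hq]
  | monomial n c =>
    have h : Commute G (Z ^ n) := Commute.pow_right (show Commute G Z from hz.symm) n
    rw [aeval_monomial, ← mul_assoc, ← Algebra.commutes, mul_assoc, h.eq, mul_assoc]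

lemma shift_pol (hz : U * Z = Z * U + U) (f : k[X]) : ∃ f' : k[X], U * aeval Z f = aeval Z f' * U := by
  have h1 : SemiconjBy U Z (Z + 1) := by
    unfold SemiconjBy; rw [hz, add_mul, one_mul]
  induction f using Polynomial.induction_on' with
  | add p q hp hq =>
    obtain ⟨p', hp⟩ := hp
    obtain ⟨q', hq⟩ := hq
    exact ⟨p' + q', by simp only [map_add, mul_add, add_mul, hp, hq]⟩
  | monomial n c =>
    refine ⟨C c * (X + 1) ^ n, ?_⟩
    have h2 := (h1.pow_right n).eq
    rw [aeval_monomial, ← mul_assoc, ← Algebra.commutes, mul_assoc, h2]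
    simp [mul_assoc]

lemma reduce (a : k) (ha : a ≠ 0) (hgen : Algebra.adjoin k {G, Gi, Z, U, V} = ⊤)
    (hgi : Gi * G = 1) (hgi' : G * Gi = 1) (hzg : Z * G = G * Z) (huz : U * Z = Z * U + U)
    (hvz : V * Z = Z * V + V) (I : Submodule S S) (hG : G - algebraMap k S a ∈ I) (hV : V ∈ I)
    (hU : U ∈ I) (d : S) : ∀ f : k[X], ∃ f' : k[X], d * aeval Z f - aeval Z f' ∈ I := by
  have hd : d ∈ Algebra.adjoin k {G, Gi, Z, U, V} := by rw [hgen]; trivial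
  induction hd using Algebra.adjoin_induction with
  | mem x hx =>
    intro f
    simp only [Set.mem_insert_iff, Set.mem_singleton_iff] at hx
    rcases hx with rfl | rfl | rfl | rfl | rfl
    · refine ⟨C a * f, ?_⟩
      have : x * aeval Z f - aeval Z (C a * f) = aeval Z f • (x - algebraMap k S a) := by
        rw [comm_pol hzg, map_mul, aeval_C, smul_eq_mul, mul_sub, Algebra.commutes]
      rw [this]
      exact I.smul_mem _ hG
    · have hzx : Z * x = x * Z := by
        calc Z * x = (x * G) * (Z * x) := by rw [hgi, one_mul]
          _ = x * (G * Z) * x := by simp only [mul_assoc]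
          _ = x * (Z * G) * x := by rw [hzg]
          _ = x * Z * (G * x) := by simp only [mul_assoc]
          _ = x * Z := by rw [hgi', mul_one]
      refine ⟨C a⁻¹ * f, ?_⟩
      have : x * aeval Z f - aeval Z (C a⁻¹ * f)
          = (aeval Z f * (- algebraMap k S a⁻¹ * x)) • (G - algebraMap k S a) := by
        have e1 : (- algebraMap k S a⁻¹ * x) * (G - algebraMap k S a)
            = x - algebraMap k S a⁻¹ := by
          rw [mul_sub, mul_assoc, hgi, mul_one, mul_assoc, ← Algebra.commutes a x, ← mul_assoc,
            neg_mul, ← map_mul, inv_mul_cancel₀ ha, map_one, neg_mul, one_mul]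
          abel
        rw [smul_eq_mul, mul_assoc, e1, comm_pol hzx, map_mul, aeval_C, mul_sub, Algebra.commutes]
      rw [this]
      exact I.smul_mem _ hG
    · exact ⟨X * f, by simp⟩
    · obtain ⟨f', h⟩ := shift_pol huz f
      refine ⟨0, ?_⟩
      rw [h, map_zero, sub_zero]
      exact I.smul_mem _ hU
    · obtain ⟨f', h⟩ := shift_pol hvz f
      refine ⟨0, ?_⟩
      rw [h, map_zero, sub_zero]
      exact I.smul_mem _ hV
  | algebraMap r => exact fun f => ⟨C r * f, by simp⟩
  | add x y _ _ hx hy =>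
    intro f
    obtain ⟨p, hp⟩ := hx f
    obtain ⟨q, hq⟩ := hy f
    refine ⟨p + q, ?_⟩
    have := I.add_mem hp hq
    rw [map_add, add_mul]
    convert this using 1
    abel
  | mul x y _ _ hx hy =>
    intro f
    obtain ⟨p, hp⟩ := hy f
    obtain ⟨q, hq⟩ := hx p
    refine ⟨q, ?_⟩
    have := I.add_mem (I.smul_mem x hp) hq
    convert this using 1
    rw [smul_eq_mul, mul_sub, mul_assoc]
    abel

theorem main_gen (a : k) (ha : a ≠ 0) (hgen : Algebra.adjoin k {G, Gi, Z, U, V} = ⊤)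
    (hgi : Gi * G = 1) (hgi' : G * Gi = 1) (hzg : Z * G = G * Z) (huz : U * Z = Z * U + U)
    (hvz : V * Z = Z * V + V) (I : Submodule S S)
    (hI : I = Submodule.span S {G - algebraMap k S a, V - algebraMap k S 0, U})
    (hrep : ∀ l : k, ∃ r : S →ₐ[k] Module.End k (P k), r G 1 = a • (1 : P k) ∧ r U 1 = 0 ∧
      r V 1 = 0 ∧ r Z 1 = l • (1 : P k)) :
    {N : Submodule S (S ⧸ I) | IsCoatom N} =
      {N : Submodule S (S ⧸ I) | ∃ c : k, N = Submodule.span S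
        {(Submodule.Quotient.mk (Z + algebraMap k S (c / 2)) : S ⧸ I)}} := by
  have hG : G - algebraMap k S a ∈ I := by rw [hI]; exact Submodule.subset_span (by simp)
  have hV : V ∈ I := by rw [hI]; exact Submodule.subset_span (by simp)
  have hU : U ∈ I := by rw [hI]; exact Submodule.subset_span (by simp)
  have hred : ∀ w : S ⧸ I, ∃ f : k[X], w = Submodule.Quotient.mk (aeval Z f) := by
    intro w
    obtain ⟨d, rfl⟩ := Submodule.Quotient.mk_surjective I w
    obtain ⟨f, hf⟩ := reduce a ha hgen hgi hgi' hzg huz hvz I hG hV hU d 1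
    refine ⟨f, ?_⟩
    rw [Submodule.Quotient.eq]
    simpa using hf
  have htop : ∀ N : Submodule S (S ⧸ I), (Submodule.Quotient.mk 1 : S ⧸ I) ∈ N → N = ⊤ := by
    intro N h
    rw [eq_top_iff]
    intro w _
    obtain ⟨d, rfl⟩ := Submodule.Quotient.mk_surjective I w
    have := N.smul_mem d h
    rwa [← Submodule.Quotient.mk_smul, smul_eq_mul, mul_one] at this
  have hmem : ∀ (l : k) (N : Submodule S (S ⧸ I)),
      (Submodule.Quotient.mk (Z - algebraMap k S l) : S ⧸ I) ∈ N → ∀ f : k[X],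
      (Submodule.Quotient.mk (aeval Z f) : S ⧸ I)
        - Submodule.Quotient.mk (algebraMap k S (f.eval l)) ∈ N := by
    intro l N h f
    obtain ⟨q, hq⟩ := X_sub_C_dvd_sub_C_eval (a := l) (p := f)
    have h3 := congrArg (aeval Z) hq
    rw [mul_comm] at h3
    simp only [map_sub, map_mul, aeval_C, aeval_X] at h3
    rw [← Submodule.Quotient.mk_sub, h3, ← smul_eq_mul, Submodule.Quotient.mk_smul]
    exact N.smul_mem _ h
  have hproper : ∀ l : k, Submodule.span S
      {(Submodule.Quotient.mk (Z - algebraMap k S l) : S ⧸ I)} ≠ ⊤ := by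
    intro l h
    have h1 : (Submodule.Quotient.mk 1 : S ⧸ I) ∈ Submodule.span S
      {(Submodule.Quotient.mk (Z - algebraMap k S l) : S ⧸ I)} := by rw [h]; trivial
    obtain ⟨d, hd⟩ := Submodule.mem_span_singleton.1 h1
    rw [← Submodule.Quotient.mk_smul, Submodule.Quotient.eq, smul_eq_mul] at hd
    obtain ⟨r, rG, rU, rV, rZ⟩ := hrep l
    have hk : ∀ e ∈ I, r e 1 = 0 := by
      intro e he
      rw [hI] at he
      induction he using Submodule.span_induction with
      | mem x hx =>
        simp only [Set.mem_insert_iff, Set.mem_singleton_iff] at hx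
        rcases hx with rfl | rfl | rfl
        · rw [map_sub, AlgHom.commutes, LinearMap.sub_apply, rG, Module.algebraMap_end_apply,
            sub_self]
        · rw [map_zero, sub_zero, rV]
        · exact rU
      | zero => simp
      | add x y _ _ hx hy => rw [map_add, LinearMap.add_apply, hx, hy, add_zero]
      | smul s x _ hx => rw [smul_eq_mul, map_mul, Module.End.mul_apply, hx, map_zero]
    have := hk _ hd
    rw [map_sub, map_mul, map_sub, map_one r, AlgHom.commutes, LinearMap.sub_apply,
      Module.End.mul_apply, LinearMap.sub_apply, rZ, Module.algebraMap_end_apply, sub_self,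
      map_zero, Module.End.one_apply, zero_sub, neg_eq_zero] at this
    exact one_ne_zero this
  have hconst : ∀ (N : Submodule S (S ⧸ I)) (c : k), c ≠ 0 →
      (Submodule.Quotient.mk (algebraMap k S c) : S ⧸ I) ∈ N → N = ⊤ := by
    intro N c hc h
    apply htop
    have := N.smul_mem (algebraMap k S c⁻¹) h
    rwa [← Submodule.Quotient.mk_smul, smul_eq_mul, ← map_mul, inv_mul_cancel₀ hc, map_one] at this
  have hco : ∀ l : k, IsCoatom (Submodule.span S
      {(Submodule.Quotient.mk (Z - algebraMap k S l) : S ⧸ I)}) := by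
    intro l
    refine ⟨hproper l, ?_⟩
    intro N hN
    obtain ⟨w, hwN, hw⟩ := SetLike.exists_of_lt hN
    obtain ⟨f, rfl⟩ := hred w
    have hself := Submodule.mem_span_singleton_self (R := S)
      (Submodule.Quotient.mk (Z - algebraMap k S l) : S ⧸ I)
    have h1 := hmem l _ hself f
    have h2 := hmem l N (hN.le hself) f
    apply hconst N (f.eval l)
    · intro h0
      rw [h0, map_zero, Submodule.Quotient.mk_zero, sub_zero] at h1
      exact hw h1
    · have := N.sub_mem hwN h2
      rwa [sub_sub_cancel] at this
  have hV' : ∀ c : k, Z + algebraMap k S (c / 2) = Z - algebraMap k S (-(c / 2)) := by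
    intro c; rw [map_neg, sub_neg_eq_add]
  ext N
  simp only [Set.mem_ofPred_eq]
  constructor
  · intro hN
    let J : Ideal k[X] :=
      { carrier := {f | (Submodule.Quotient.mk (aeval Z f) : S ⧸ I) ∈ N}
        zero_mem' := by
          show (Submodule.Quotient.mk (aeval Z (0 : k[X])) : S ⧸ I) ∈ N
          rw [map_zero, Submodule.Quotient.mk_zero]; exact N.zero_mem
        add_mem' := by
          intro p q hp hq
          show (Submodule.Quotient.mk (aeval Z (p + q)) : S ⧸ I) ∈ N
          rw [map_add, Submodule.Quotient.mk_add]; exact N.add_mem hp hq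
        smul_mem' := by
          intro p q hq
          show (Submodule.Quotient.mk (aeval Z (p * q)) : S ⧸ I) ∈ N
          rw [map_mul, ← smul_eq_mul, Submodule.Quotient.mk_smul]; exact N.smul_mem _ hq }
    have hJ : J ≠ ⊤ := by
      intro h
      have h1 : (1 : k[X]) ∈ J := by rw [h]; trivial
      have h2 : (Submodule.Quotient.mk (aeval Z (1 : k[X])) : S ⧸ I) ∈ N := h1
      rw [map_one] at h2
      exact hN.1 (htop N h2)
    obtain ⟨p, hp⟩ := IsPrincipalIdealRing.principal J
    have hroot : ∃ l, p.eval l = 0 := by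
      by_cases h : p.degree = 0
      · exfalso
        apply hJ
        rw [hp]
        exact Ideal.span_singleton_eq_top.2 (Polynomial.isUnit_iff_degree_eq_zero.2 h)
      · exact IsAlgClosed.exists_root p h
    obtain ⟨l, hl⟩ := hroot
    have hle : N ≤ Submodule.span S
        {(Submodule.Quotient.mk (Z - algebraMap k S l) : S ⧸ I)} := by
      intro w hw
      obtain ⟨f, rfl⟩ := hred w
      have hf : f ∈ J := hw
      rw [hp] at hf
      obtain ⟨q, rfl⟩ := Submodule.mem_span_singleton.1 hf
      have h1 := hmem l _ (Submodule.mem_span_singleton_self (R := S)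
        (Submodule.Quotient.mk (Z - algebraMap k S l) : S ⧸ I)) (q • p)
      rwa [smul_eq_mul, eval_mul, hl, mul_zero, map_zero, Submodule.Quotient.mk_zero,
        sub_zero] at h1
    refine ⟨-2 * l, ?_⟩
    have h2 : -(-2 * l / 2) = l := by
      field_simp
    rw [hV', h2]
    by_contra hne
    exact (hproper l) (hN.2 _ (lt_of_le_of_ne hle hne))
  · rintro ⟨c, rfl⟩
    rw [hV']
    exact hco _

end generic
end JV

namespace JV

lemma gen_top : Algebra.adjoin k {sG k, sGinv k, sZ k, sU k, sV k} = ⊤ := by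
  have h := Algebra.adjoin_adjoin_coe_preimage (R := k)
    (s := ({DG k, DGinv k, DZ k, DU k, DV k} : Set (D k)))
  have e : ({sG k, sGinv k, sZ k, sU k, sV k} : Set (Dgeq k))
      = (Subtype.val ⁻¹' ({DG k, DGinv k, DZ k, DU k, DV k} : Set (D k))) := by
    ext x
    simp only [Set.mem_insert_iff, Set.mem_singleton_iff, Set.mem_preimage, Subtype.ext_iff,
      sG, sGinv, sZ, sU, sV]
  rw [e]
  exact h

lemma s_gi : sGinv k * sG k = 1 := by
  apply Subtype.ext
  have h := rel_D k (JRel.ginvg (k := k))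
  rw [map_mul, map_one] at h
  exact h

lemma s_gi' : sG k * sGinv k = 1 := by
  apply Subtype.ext
  have h := rel_D k (JRel.gginv (k := k))
  rw [map_mul, map_one] at h
  exact h

lemma s_zg : sZ k * sG k = sG k * sZ k := by
  apply Subtype.ext
  have h := rel_D k (JRel.zg (k := k))
  rw [map_mul, map_mul] at h
  exact h

lemma s_uz : sU k * sZ k = sZ k * sU k + sU k := by
  apply Subtype.ext
  have h := rel_D k (JRel.uz (k := k))
  rw [map_mul, map_add, map_mul] at h
  exact h

lemma s_vz : sV k * sZ k = sZ k * sV k + sV k := by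
  apply Subtype.ext
  have h := rel_D k (JRel.vz (k := k))
  rw [map_mul, map_add, map_mul] at h
  exact h

lemma s_rep (a : k) (ha : a ≠ 0) (l : k) : ∃ r : Dgeq k →ₐ[k] Module.End k (P k),
    r (sG k) 1 = a • (1 : P k) ∧ r (sU k) 1 = 0 ∧ r (sV k) 1 = 0 ∧
    r (sZ k) 1 = l • (1 : P k) := by
  obtain ⟨r, h1, h2, h3, h4⟩ := exists_rep k a l ha
  refine ⟨r.comp (Dgeq k).val, ?_, ?_, ?_, ?_⟩
  · show r (DG k) 1 = _
    rw [h1, oG_one]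
  · show r (DU k) 1 = _
    rw [h2, oU_one]
  · show r (DV k) 1 = _
    rw [h3, LinearMap.smul_apply, oV_one, smul_zero]
  · show r (DZ k) 1 = _
    rw [h4, oZ_one]

end JV

/-- for `a ∈ k^×`, the maximal submodules of `W_{a,0}` are exactly
the `V_{a,c}`, `c ∈ k`. -/
theorem maximal_submodules_Wa0 (a : k) (ha : a ≠ 0) :
    {N : Submodule (Dgeq k) (Wmod k a 0) | IsCoatom N} =
      {N : Submodule (Dgeq k) (Wmod k a 0) | ∃ c : k, N = Vsub k a c} := by
  exact JV.main_gen a ha (JV.gen_top k) (JV.s_gi k) (JV.s_gi' k) (JV.s_zg k) (JV.s_uz k) (JV.s_vz k)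
    (WIdeal k a 0) rfl (JV.s_rep k a ha)
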